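/- There is a constant K > 0 such that for all sufficiently large n, ζ(3) − b_n/a_n ≤ K/a_n²; in fact any constant K greater than 6·ζ(3) works. -/

import Mathlib

/-- ζ(3), the sum of the series ∑_{m=1}^∞ 1/m³. -/
noncomputable def zeta3 : ℝ := ∑' m : ℕ, 1 / ((m : ℝ) + 1) ^ 3

/-- `z n = ∑_{m=1}^n 1/m³`. -/
noncomputable def zseq (n : ℕ) : ℝ := ∑ m ∈ Finset.Icc 1 n, 1 / (m : ℝ) ^ 3

/-- `a n = ∑_{k=0}^n C(n,k)² C(n+k,k)²`. -/
noncomputable def aseq (n : ℕ) : ℝ :=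
  ∑ k ∈ Finset.range (n + 1), (n.choose k : ℝ) ^ 2 * ((n + k).choose k : ℝ) ^ 2

/-- `b n = a n * z n + ∑_{k=1}^n ∑_{m=1}^k (-1)^{m+1} C(n,k)² C(n+k,k)²
      / (2 m³ C(n,m) C(n+m,m))`. -/
noncomputable def bseq (n : ℕ) : ℝ :=
  aseq n * zseq n +
    ∑ k ∈ Finset.Icc 1 n, ∑ m ∈ Finset.Icc 1 k,
      (-1 : ℝ) ^ (m + 1) * (n.choose k : ℝ) ^ 2 * ((n + k).choose k : ℝ) ^ 2 /
        (2 * (m : ℝ) ^ 3 * (n.choose m : ℝ) * ((n + m).choose m : ℝ))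

noncomputable def bet (n k : ℕ) : ℝ := (n.choose k : ℝ) * ((n + k).choose k : ℝ)

noncomputable def cc (n k : ℕ) : ℝ :=
  zseq n + ∑ m ∈ Finset.Icc 1 k, (-1 : ℝ) ^ (m + 1) / (2 * (m : ℝ) ^ 3 * bet n m)

lemma bet_zero (n : ℕ) : bet n 0 = 1 := by simp [bet]

lemma bet_eq_zero {n k : ℕ} (h : n < k) : bet n k = 0 := by
  simp [bet, Nat.choose_eq_zero_of_lt h]

lemma bet_pos {n k : ℕ} (h : k ≤ n) : 0 < bet n k := by
  unfold bet
  have h1 := Nat.choose_pos h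
  have h2 : 0 < (n + k).choose k := Nat.choose_pos (by omega)
  positivity

lemma bet_n (n k : ℕ) : bet (n + 1) k * ((n : ℝ) + 1 - k) = bet n k * ((n : ℝ) + 1 + k) := by
  rcases Nat.lt_or_ge (n + 1) k with h | h
  · rw [bet_eq_zero h, bet_eq_zero (by omega)]; ring
  have h1 := Nat.choose_mul_succ_eq n k
  have h2 := Nat.choose_mul_succ_eq (n + k) k
  have e : n + k + 1 - k = n + 1 := by omega
  rw [e] at h2
  have h1' : (n.choose k : ℝ) * (n + 1) = ((n + 1).choose k : ℝ) * ((n : ℝ) + 1 - k) := by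
    have := congrArg (Nat.cast : ℕ → ℝ) h1
    push_cast [Nat.cast_sub h] at this
    exact this
  have h2' : ((n + k).choose k : ℝ) * (n + k + 1) = ((n + 1 + k).choose k : ℝ) * (n + 1) := by
    have := congrArg (Nat.cast : ℕ → ℝ) h2
    rw [show n + k + 1 = n + 1 + k by ring] at this
    push_cast at this
    linarith
  unfold bet
  have hn : (n : ℝ) + 1 ≠ 0 := by positivity
  apply mul_right_cancel₀ hn
  linear_combination (-((n + 1 + k).choose k : ℝ) * (n + 1)) * h1' - (n.choose k : ℝ) * (n + 1) * h2'

lemma bet_k (n k : ℕ) :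
    bet n (k + 1) * ((k : ℝ) + 1) ^ 2 = bet n k * (((n : ℝ) - k) * (n + k + 1)) := by
  rcases Nat.lt_or_ge n k with h | h
  · rw [bet_eq_zero h, bet_eq_zero (by omega)]; ring
  have h1 := Nat.choose_succ_right_eq n k
  have h2 := Nat.add_one_mul_choose_eq (n + k) k
  have h1' : (n.choose (k + 1) : ℝ) * (k + 1) = (n.choose k : ℝ) * ((n : ℝ) - k) := by
    have := congrArg (Nat.cast : ℕ → ℝ) h1
    push_cast [Nat.cast_sub h] at this
    exact this
  have h2' : ((n : ℝ) + k + 1) * ((n + k).choose k : ℝ)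
      = ((n + (k + 1)).choose (k + 1) : ℝ) * (k + 1) := by
    have := congrArg (Nat.cast : ℕ → ℝ) h2
    push_cast at this
    exact this
  unfold bet
  linear_combination (((n + (k + 1)).choose (k + 1) : ℝ) * (k + 1)) * h1'
    - (n.choose k : ℝ) * ((n : ℝ) - k) * h2'

lemma zseq_succ (n : ℕ) : zseq (n + 1) = zseq n + 1 / ((n : ℝ) + 1) ^ 3 := by
  unfold zseq
  rw [Finset.sum_Icc_succ_top (by omega)]
  push_cast; rfl

lemma cc_zero (n : ℕ) : cc n 0 = zseq n := by simp [cc]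

lemma cc_succ (n k : ℕ) :
    cc n (k + 1) = cc n k + (-1 : ℝ) ^ k / (2 * ((k : ℝ) + 1) ^ 3 * bet n (k + 1)) := by
  unfold cc
  rw [Finset.sum_Icc_succ_top (by omega)]
  push_cast
  rw [show (-1 : ℝ) ^ (k + 1 + 1) = (-1) ^ k by ring, add_assoc]

lemma cc_diff (n k : ℕ) (h : k ≤ n) :
    cc (n + 1) k = cc n k + (-1 : ℝ) ^ k / (((n : ℝ) + 1) ^ 2 * (n + 1 + k) * bet n k) := by
  induction k with
  | zero =>
    rw [cc_zero, cc_zero, bet_zero, zseq_succ]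
    push_cast
    field_simp
    ring
  | succ k ih =>
    rw [cc_succ, cc_succ, ih (by omega)]
    have hkn : (0 : ℝ) < (n : ℝ) - k := by
      have : ((k + 1 : ℕ) : ℝ) ≤ n := by exact_mod_cast h
      push_cast at this
      linarith
    have t0 := bet_pos (show k ≤ n by omega)
    have e1 : bet n (k + 1) = bet n k * (((n : ℝ) - k) * (n + k + 1)) / ((k : ℝ) + 1) ^ 2 := by
      rw [eq_div_iff (by positivity)]; exact bet_k n k
    have e2 : bet (n + 1) (k + 1) = bet n (k + 1) * ((n : ℝ) + k + 2) / ((n : ℝ) - k) := by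
      rw [eq_div_iff hkn.ne']
      have := bet_n n (k + 1)
      push_cast at this
      linear_combination this
    rw [e2, e1]
    push_cast
    have p1 : (n : ℝ) + 1 + (k + 1) ≠ 0 := by positivity
    have p2 : (n : ℝ) + k + 2 ≠ 0 := by positivity
    have p3 : (n : ℝ) + k + 1 ≠ 0 := by positivity
    have p4 : (n : ℝ) + 1 + k ≠ 0 := by positivity
    have p5 := hkn.ne'
    have p6 := t0.ne'
    rw [pow_succ (-1 : ℝ) k]
    generalize (-1 : ℝ) ^ k = s
    generalize bet n k = t at *
    generalize cc n k = c
    field_simp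
    ring

noncomputable def PP (x : ℝ) : ℝ := 34 * x ^ 3 + 51 * x ^ 2 + 27 * x + 5

noncomputable def BB (x k t : ℝ) : ℝ := 4 * (2 * x + 1) * (k * (2 * k + 1) - (2 * x + 1) ^ 2) * t ^ 2

noncomputable def TA (n k : ℕ) : ℝ :=
  ((n : ℝ) + 2) ^ 3 * bet (n + 2) k ^ 2 - PP (n + 1) * bet (n + 1) k ^ 2
    + ((n : ℝ) + 1) ^ 3 * bet n k ^ 2

noncomputable def TB (n k : ℕ) : ℝ :=
  ((n : ℝ) + 2) ^ 3 * (bet (n + 2) k ^ 2 * cc (n + 2) k)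
    - PP (n + 1) * (bet (n + 1) k ^ 2 * cc (n + 1) k)
    + ((n : ℝ) + 1) ^ 3 * (bet n k ^ 2 * cc n k)

noncomputable def AA (n k : ℕ) : ℝ :=
  BB (n + 1) k (bet (n + 1) k) * cc (n + 1) k
    - 5 * (2 * ((n : ℝ) + 1) + 1) * (-1) ^ k * k / ((n + 1) * (n + 2)) * bet (n + 1) k

lemma low (n k : ℕ) : bet n k ^ 2 * cc n k = bet n k ^ 2 * cc (n + 1) k
    - bet n k * (-1 : ℝ) ^ k / (((n : ℝ) + 1) ^ 2 * (n + 1 + k)) := by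
  rcases Nat.lt_or_ge n k with h | h
  · rw [bet_eq_zero h]; ring
  · rw [cc_diff n k h]
    have := (bet_pos h).ne'
    have : (n : ℝ) + 1 + k ≠ 0 := by positivity
    field_simp
    ring

lemma bet_low (n k : ℕ) : bet n k = bet (n + 1) k * ((n : ℝ) + 1 - k) / ((n : ℝ) + 1 + k) := by
  rw [eq_div_iff (by positivity)]
  exact (bet_n n k).symm

lemma bet_high (n k : ℕ) (h : k ≤ n) :
    bet (n + 1) k = bet n k * ((n : ℝ) + 1 + k) / ((n : ℝ) + 1 - k) := by
  have : (k : ℝ) ≤ n := by exact_mod_cast h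
  rw [eq_div_iff (by linarith)]
  exact bet_n n k

lemma TA_zero (n : ℕ) : TA n 0 = BB (n + 1) 0 (bet (n + 1) 0) := by
  simp only [TA, BB, PP, bet_zero]; ring

lemma TB_zero (n : ℕ) : TB n 0 = AA n 0 := by
  simp only [TB, AA, BB, PP, bet_zero, cc_zero, zseq_succ]
  push_cast
  have : (n : ℝ) + 1 + 1 ≠ 0 := by positivity
  have : (n : ℝ) + 1 ≠ 0 := by positivity
  field_simp
  ring

lemma step_facts (n k : ℕ) (h : k ≤ n) :
    bet (n + 1) k = bet (n + 1) (k + 1) * ((k : ℝ) + 1) ^ 2 / (((n : ℝ) + 1 - k) * (n + k + 2)) := by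
  have : (k : ℝ) ≤ n := by exact_mod_cast h
  have h1 : (n : ℝ) + 1 - k ≠ 0 := by linarith
  have h2 : (n : ℝ) + k + 2 ≠ 0 := by positivity
  rw [eq_div_iff (mul_ne_zero h1 h2)]
  have := bet_k (n + 1) k
  push_cast at this
  linear_combination -this

lemma TA_step (n k : ℕ) (h : k ≤ n) : TA n (k + 1) =
    BB (n + 1) ((k + 1 : ℕ) : ℝ) (bet (n + 1) (k + 1)) - BB (n + 1) k (bet (n + 1) k) := by
  have hk : (k : ℝ) ≤ n := by exact_mod_cast h
  rw [step_facts n k h]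
  unfold TA
  rw [bet_high (n + 1) (k + 1) (by omega), bet_low n (k + 1)]
  generalize bet (n + 1) (k + 1) = t
  unfold BB PP
  push_cast
  have h1 : (n : ℝ) + 1 - k ≠ 0 := by linarith
  have h2 : (n : ℝ) + k + 2 ≠ 0 := by positivity
  have h3 : (n : ℝ) + 1 + (k + 1) ≠ 0 := by positivity
  have h4 : (n : ℝ) + 1 + 1 - (k + 1) ≠ 0 := by
    intro h; apply h1; linarith
  rw [show (n : ℝ) + 1 + 1 - (k + 1) = n + 1 - k by ring,
    show (n : ℝ) + 1 + (k + 1) = n + k + 2 by ring]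
  field_simp
  ring

lemma TB_step (n k : ℕ) (h : k ≤ n) : TB n (k + 1) = AA n (k + 1) - AA n k := by
  have hk : (k : ℝ) ≤ n := by exact_mod_cast h
  unfold TB AA
  rw [low n (k + 1), cc_diff (n + 1) (k + 1) (by omega)]
  rw [show cc (n + 1) k = cc (n + 1) (k + 1)
    - (-1 : ℝ) ^ k / (2 * ((k : ℝ) + 1) ^ 3 * bet (n + 1) (k + 1)) by rw [cc_succ]; ring]
  rw [step_facts n k h, bet_high (n + 1) (k + 1) (by omega), bet_low n (k + 1)]
  have ht := (bet_pos (show k + 1 ≤ n + 1 by omega)).ne'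
  rw [pow_succ (-1 : ℝ) k]
  generalize bet (n + 1) (k + 1) = t at *
  generalize cc (n + 1) (k + 1) = c
  generalize (-1 : ℝ) ^ k = s
  unfold BB PP
  push_cast
  have h1 : (n : ℝ) + 1 - k ≠ 0 := by linarith
  have h2 : (n : ℝ) + k + 2 ≠ 0 := by positivity
  have h5 : (n : ℝ) + k + 3 ≠ 0 := by positivity
  rw [show (n : ℝ) + 1 + 1 - (k + 1) = n + 1 - k by ring,
    show (n : ℝ) + 1 + (k + 1) = n + k + 2 by ring,
    show (n : ℝ) + 1 + 1 + (k + 1) = n + k + 3 by ring,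
    show (n : ℝ) + 1 - (k + 1) = n - k by ring,
    show (n : ℝ) + 1 + 1 = n + 2 by ring]
  have h6 : (n : ℝ) + 2 ≠ 0 := by positivity
  have h7 : (n : ℝ) + 1 ≠ 0 := by positivity
  have h8 : (k : ℝ) + 1 ≠ 0 := by positivity
  field_simp
  ring

lemma bet_top (n : ℕ) : bet (n + 2) (n + 2) =
    bet (n + 1) (n + 1) * (2 * n + 3) * 2 / (n + 2) := by
  have h1 := bet_n (n + 1) (n + 1)
  have h2 := bet_k (n + 2) (n + 1)
  push_cast at h1 h2
  rw [eq_div_iff (by positivity)]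
  have : (n : ℝ) + 2 ≠ 0 := by positivity
  apply mul_right_cancel₀ this
  simp only [show n + 1 + 1 = n + 2 by rfl] at h1 h2
  linear_combination h2 + (2 * n + 4 : ℝ) * h1

lemma bet_top' (n : ℕ) : bet (n + 2) (n + 1) = bet (n + 1) (n + 1) * (2 * n + 3) := by
  have h1 := bet_n (n + 1) (n + 1)
  push_cast at h1
  simp only [show n + 1 + 1 = n + 2 by rfl] at h1
  linear_combination h1

lemma TA_top (n : ℕ) : TA n (n + 2) = - BB (n + 1) ((n + 1 : ℕ) : ℝ) (bet (n + 1) (n + 1)) := by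
  unfold TA
  rw [bet_eq_zero (show n < n + 2 by omega), bet_eq_zero (show n + 1 < n + 2 by omega), bet_top]
  unfold BB
  push_cast
  field_simp
  ring

lemma TB_top (n : ℕ) : TB n (n + 2) = - AA n (n + 1) := by
  unfold TB AA
  rw [bet_eq_zero (show n < n + 2 by omega), bet_eq_zero (show n + 1 < n + 2 by omega),
    cc_succ (n + 2) (n + 1), cc_diff (n + 1) (n + 1) le_rfl, bet_top]
  have ht := (bet_pos (show n + 1 ≤ n + 1 by omega)).ne'
  generalize bet (n + 1) (n + 1) = t at *
  generalize cc (n + 1) (n + 1) = c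
  generalize (-1 : ℝ) ^ (n + 1) = s
  unfold BB
  push_cast
  rw [show (n : ℝ) + 1 + 1 + (n + 1) = 2 * n + 3 by ring,
    show (n : ℝ) + 1 + 1 = n + 2 by ring]
  field_simp
  ring

lemma sumA (n k : ℕ) (h : k ≤ n + 1) :
    ∑ j ∈ Finset.range (k + 1), TA n j = BB (n + 1) k (bet (n + 1) k) := by
  induction k with
  | zero => simp [TA_zero]
  | succ k ih => rw [Finset.sum_range_succ, ih (by omega), TA_step n k (by omega)]; ring

lemma sumB (n k : ℕ) (h : k ≤ n + 1) :
    ∑ j ∈ Finset.range (k + 1), TB n j = AA n k := by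
  induction k with
  | zero => simp [TB_zero]
  | succ k ih => rw [Finset.sum_range_succ, ih (by omega), TB_step n k (by omega)]; ring

lemma aseq_eq (n N : ℕ) (h : n ≤ N) : aseq n = ∑ k ∈ Finset.range (N + 1), bet n k ^ 2 := by
  unfold aseq
  rw [← Finset.sum_subset (Finset.range_mono (show n + 1 ≤ N + 1 by omega))]
  · exact Finset.sum_congr rfl fun k _ => by unfold bet; ring
  · intro k _ hk
    rw [bet_eq_zero (by simpa using hk)]; ring

lemma bseq_eq' (n : ℕ) : bseq n = ∑ k ∈ Finset.range (n + 1), bet n k ^ 2 * cc n k := by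
  unfold bseq
  rw [aseq_eq n n le_rfl]
  have : ∑ k ∈ Finset.range (n + 1), bet n k ^ 2 * cc n k =
      ∑ k ∈ Finset.range (n + 1), (bet n k ^ 2 * zseq n + bet n k ^ 2 *
        ∑ m ∈ Finset.Icc 1 k, (-1 : ℝ) ^ (m + 1) / (2 * (m : ℝ) ^ 3 * bet n m)) :=
    Finset.sum_congr rfl fun k _ => by unfold cc; ring
  rw [this, Finset.sum_add_distrib, Finset.sum_mul]
  congr 1
  symm
  rw [← Finset.sum_subset (s₁ := Finset.Icc 1 n)]
  · refine Finset.sum_congr rfl fun k _ => ?_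
    rw [Finset.mul_sum]
    refine Finset.sum_congr rfl fun m _ => ?_
    unfold bet
    rw [← mul_div_assoc]
    congr 1 <;> ring
  · intro k hk
    simp at hk ⊢
    omega
  · intro k hk hk'
    have : k = 0 := by simp at hk hk'; omega
    subst this
    simp

lemma bseq_eq (n N : ℕ) (h : n ≤ N) :
    bseq n = ∑ k ∈ Finset.range (N + 1), bet n k ^ 2 * cc n k := by
  rw [bseq_eq']
  apply Finset.sum_subset (Finset.range_mono (show n + 1 ≤ N + 1 by omega))
  intro k _ hk
  rw [bet_eq_zero (by simpa using hk)]; ring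

lemma recA (n : ℕ) : ((n : ℝ) + 2) ^ 3 * aseq (n + 2) - PP (n + 1) * aseq (n + 1)
    + ((n : ℝ) + 1) ^ 3 * aseq n = 0 := by
  rw [aseq_eq (n + 2) (n + 2) (by omega), aseq_eq (n + 1) (n + 2) (by omega),
    aseq_eq n (n + 2) (by omega), Finset.mul_sum, Finset.mul_sum, Finset.mul_sum,
    ← Finset.sum_sub_distrib, ← Finset.sum_add_distrib]
  change ∑ k ∈ Finset.range (n + 2 + 1), TA n k = 0
  rw [Finset.sum_range_succ, sumA n (n + 1) le_rfl, TA_top]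
  ring

lemma recB (n : ℕ) : ((n : ℝ) + 2) ^ 3 * bseq (n + 2) - PP (n + 1) * bseq (n + 1)
    + ((n : ℝ) + 1) ^ 3 * bseq n = 0 := by
  rw [bseq_eq (n + 2) (n + 2) (by omega), bseq_eq (n + 1) (n + 2) (by omega),
    bseq_eq n (n + 2) (by omega), Finset.mul_sum, Finset.mul_sum, Finset.mul_sum,
    ← Finset.sum_sub_distrib, ← Finset.sum_add_distrib]
  change ∑ k ∈ Finset.range (n + 2 + 1), TB n k = 0
  rw [Finset.sum_range_succ, sumB n (n + 1) le_rfl, TB_top]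
  ring

lemma casoratian (n : ℕ) :
    ((n : ℝ) + 1) ^ 3 * (bseq (n + 1) * aseq n - aseq (n + 1) * bseq n) = 6 := by
  induction n with
  | zero =>
    norm_num [bseq, aseq, zseq, Finset.sum_range_succ, Nat.choose]
  | succ n ih =>
    have hA := recA n
    have hB := recB n
    push_cast
    rw [show n + 1 + 1 = n + 2 by rfl]
    linear_combination ih + aseq (n + 1) * hB - bseq (n + 1) * hA

lemma aseq_pos (n : ℕ) : 0 < aseq n := by
  rw [aseq_eq n n le_rfl]
  apply Finset.sum_pos
  · intro k hk
    have := bet_pos (show k ≤ n by simp at hk; omega)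
    positivity
  · simp

lemma aseq_mono : Monotone aseq := by
  apply monotone_nat_of_le_succ
  intro n
  rw [aseq_eq n (n + 1) (by omega), aseq_eq (n + 1) (n + 1) le_rfl]
  apply Finset.sum_le_sum
  intro k _
  unfold bet
  have h1 : n.choose k ≤ (n + 1).choose k := Nat.choose_le_choose k (by omega)
  have h2 : (n + k).choose k ≤ (n + 1 + k).choose k := Nat.choose_le_choose k (by omega)
  gcongr

lemma summ : Summable fun m : ℕ => 1 / ((m : ℝ) + 1) ^ 3 := by
  have := (summable_nat_add_iff 1).mpr (Real.summable_one_div_nat_pow.mpr (show 1 < 3 by norm_num))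
  simpa using this

lemma zseq_range (n : ℕ) : zseq n = ∑ m ∈ Finset.range n, 1 / ((m : ℝ) + 1) ^ 3 := by
  induction n with
  | zero => simp [zseq]
  | succ n ih => rw [zseq_succ, Finset.sum_range_succ, ih]

lemma zseq_le (n : ℕ) : zseq n ≤ zeta3 := by
  rw [zseq_range]
  exact summ.sum_le_tsum _ (fun i _ => by positivity)

lemma zseq_nonneg (n : ℕ) : 0 ≤ zseq n := by
  rw [zseq_range]; positivity

lemma zseq_tendsto : Filter.Tendsto zseq Filter.atTop (nhds zeta3) := by
  have := summ.hasSum.tendsto_sum_nat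
  rw [show zseq = fun n => ∑ m ∈ Finset.range n, 1 / ((m : ℝ) + 1) ^ 3 from funext zseq_range]
  exact this

lemma cc_close (n k : ℕ) (h : k ≤ n) : |cc n k - zseq n| ≤ zeta3 / ((n : ℝ) + 1) := by
  unfold cc
  rw [add_sub_cancel_left]
  refine (Finset.abs_sum_le_sum_abs _ _).trans ?_
  have : ∑ m ∈ Finset.Icc 1 k, |(-1 : ℝ) ^ (m + 1) / (2 * (m : ℝ) ^ 3 * bet n m)|
      ≤ ∑ m ∈ Finset.Icc 1 k, 1 / (m : ℝ) ^ 3 * (1 / ((n : ℝ) + 1)) := by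
    apply Finset.sum_le_sum
    intro m hm
    obtain ⟨hm1, hm2⟩ := Finset.mem_Icc.mp hm
    have hb : (n : ℝ) + 1 ≤ bet n m := by
      have h1 : 1 ≤ n.choose m := Nat.choose_pos (by omega)
      have h2 : n + 1 ≤ (n + m).choose m := by
        have : (n + 1).choose 1 ≤ (n + m).choose n := by
          rw [show (n + 1).choose 1 = (n + 1).choose n by simp]
          exact Nat.choose_le_choose n (by omega)
        rw [Nat.choose_symm_add] at this
        simpa using this
      unfold bet
      have h3 := Nat.mul_le_mul h1 h2
      rw [one_mul] at h3
      exact_mod_cast h3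
    have hmp : (0 : ℝ) < m := by exact_mod_cast hm1
    have hbp : 0 < bet n m := bet_pos (by omega)
    rw [abs_div, abs_pow, abs_neg, abs_one, one_pow, abs_of_pos (by positivity),
      ← one_div_mul_one_div_rev, one_div_mul_one_div_rev, ← one_div_mul_one_div_rev, mul_comm]
    apply mul_le_mul
    · apply one_div_le_one_div_of_le (by positivity)
      have : 0 < (m : ℝ) ^ 3 := by positivity
      linarith
    · exact one_div_le_one_div_of_le (by positivity) hb
    · positivity
    · positivity
  refine this.trans ?_
  rw [← Finset.sum_mul, mul_one_div]
  gcongr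
  exact zseq_le k

lemma quot_tendsto : Filter.Tendsto (fun n => bseq n / aseq n) Filter.atTop (nhds zeta3) := by
  have h0 : Filter.Tendsto (fun n : ℕ => zeta3 / ((n : ℝ) + 1)) Filter.atTop (nhds 0) := by
    have := (tendsto_one_div_add_atTop_nhds_zero_nat (𝕜 := ℝ)).const_mul zeta3
    simpa only [mul_one_div, mul_zero] using this
  have hd : Filter.Tendsto (fun n => bseq n / aseq n - zseq n) Filter.atTop (nhds 0) := by
    apply squeeze_zero_norm _ h0
    intro n
    have ha := aseq_pos n
    rw [Real.norm_eq_abs, div_sub' ha.ne', abs_div, abs_of_pos ha, div_le_iff₀ ha]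
    rw [bseq_eq', aseq_eq n n le_rfl, Finset.sum_mul, ← Finset.sum_sub_distrib, Finset.mul_sum]
    refine (Finset.abs_sum_le_sum_abs _ _).trans (Finset.sum_le_sum fun k hk => ?_)
    rw [← mul_sub, abs_mul, abs_of_nonneg (sq_nonneg _), mul_comm]
    exact mul_le_mul_of_nonneg_right (cc_close n k (by simp at hk; omega)) (sq_nonneg _)
  have := hd.add zseq_tendsto
  simpa using this

lemma quot_diff (n d : ℕ) : bseq (n + d) / aseq (n + d) - bseq n / aseq n
    ≤ 6 / aseq n ^ 2 * (zseq (n + d) - zseq n) := by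
  induction d with
  | zero => simp
  | succ d ih =>
    have hc := casoratian (n + d)
    have h0 := aseq_pos n
    have h1 := aseq_pos (n + d)
    have h2 := aseq_pos (n + d + 1)
    have m1 : aseq n ≤ aseq (n + d) := aseq_mono (by omega)
    have m2 : aseq n ≤ aseq (n + d + 1) := aseq_mono (by omega)
    rw [← add_assoc, zseq_succ]
    set x : ℝ := ((n + d : ℕ) : ℝ) + 1 with hx
    have hxp : 0 < x := by positivity
    have e : bseq (n + d + 1) / aseq (n + d + 1) - bseq (n + d) / aseq (n + d)
        = 6 / (aseq (n + d) * aseq (n + d + 1)) * (1 / x ^ 3) := by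
      rw [← hc]
      field_simp
    have : 6 / (aseq (n + d) * aseq (n + d + 1)) * (1 / x ^ 3) ≤ 6 / aseq n ^ 2 * (1 / x ^ 3) := by
      rw [sq]
      gcongr
    linarith

lemma main_bound (n : ℕ) : zeta3 - bseq n / aseq n ≤ 6 * zeta3 / aseq n ^ 2 := by
  have h0 := aseq_pos n
  have ht := (quot_tendsto.sub_const (bseq n / aseq n))
  refine le_of_tendsto ht ?_
  filter_upwards [Filter.eventually_ge_atTop n] with N hN
  obtain ⟨d, rfl⟩ := Nat.exists_eq_add_of_le hN
  refine (quot_diff n d).trans ?_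
  rw [mul_div_right_comm]
  gcongr
  linarith [zseq_le (n + d), zseq_nonneg n]

/-- There is a constant `K > 0` such that eventually `ζ(3) - b n / a n ≤ K / (a n)²`;
in fact any constant `K` greater than `6 ζ(3)` works. -/
theorem zeta3_minus_b_over_a_bigO :
    (∃ K : ℝ, 0 < K ∧ ∀ᶠ n : ℕ in Filter.atTop, zeta3 - bseq n / aseq n ≤ K / (aseq n) ^ 2) ∧
    (∀ K : ℝ, 6 * zeta3 < K →
      ∀ᶠ n : ℕ in Filter.atTop, zeta3 - bseq n / aseq n ≤ K / (aseq n) ^ 2) := by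
  have key : ∀ K : ℝ, 6 * zeta3 < K →
      ∀ᶠ n : ℕ in Filter.atTop, zeta3 - bseq n / aseq n ≤ K / (aseq n) ^ 2 := by
    intro K hK
    refine Filter.Eventually.of_forall fun n => (main_bound n).trans ?_
    gcongr
  refine ⟨⟨6 * zeta3 + 1, ?_, key _ (by linarith)⟩, key⟩
  linarith [zseq_le 0, zseq_nonneg 0]
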